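/- Let d be a positive integer with ν₂(d) ≥ 3 and set δ = ν₂(d) − 2. Then for every positive integer n, ν₂(W_d(n)) = 3·s₂(n) + δ if and only if, in the binary expansion of n, all of the 1s come before all of the 0s; equivalently, n = 2^a·(2^b − 1) for some nonnegative integer a and positive integer b. -/

import Mathlib

/-- `Wstar d n` is the number of Abelian squares: the sum over all tuples
`(x₁,…,x_d)` of nonnegative integers summing to `n` of the square of the
multinomial coefficient `n!/(x₁!⋯x_d!)`. -/
def Wstar (d n : ℕ) : ℕ :=
  ∑ x ∈ Finset.Nat.antidiagonalTuple d n, (Nat.multinomial Finset.univ x) ^ 2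

/-- `W d n` is the number of `2n`-step closed walks at the origin in `ℤ^d`. -/
def W (d n : ℕ) : ℕ := Nat.choose (2 * n) n * Wstar d n

/-- `s2 n` is the number of ones in the binary expansion of `n`. -/
def s2 (n : ℕ) : ℕ := (Nat.digits 2 n).sum

theorem s2_add_val (n : ℕ) : s2 n + padicValNat 2 (n.factorial) = n := by
  have : Fact (Nat.Prime 2) := ⟨Nat.prime_two⟩
  have h := sub_one_mul_padicValNat_factorial (p := 2) n
  have h2 := Nat.digit_sum_le 2 n
  unfold s2
  omega

theorem val_choose (n k : ℕ) (hk : k ≤ n) :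
    padicValNat 2 (n.choose k) + s2 n = s2 k + s2 (n - k) := by
  have : Fact (Nat.Prime 2) := ⟨Nat.prime_two⟩
  have h := congrArg (padicValNat 2) (Nat.choose_mul_factorial_mul_factorial hk)
  rw [padicValNat.mul (mul_ne_zero (Nat.choose_pos hk).ne' (Nat.factorial_ne_zero _))
    (Nat.factorial_ne_zero _), padicValNat.mul (Nat.choose_pos hk).ne' (Nat.factorial_ne_zero _)] at h
  have h1 := s2_add_val n
  have h2 := s2_add_val k
  have h3 := s2_add_val (n - k)
  omega

theorem s2_add_le (m k : ℕ) : s2 (m + k) ≤ s2 m + s2 k := by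
  have := val_choose (m + k) k (by omega)
  rw [Nat.add_sub_cancel] at this
  omega

theorem s2_pos (n : ℕ) (hn : 0 < n) : 0 < s2 n := by
  induction n using Nat.strong_induction_on with
  | _ n ih =>
    unfold s2 at *
    rw [Nat.digits_def' (by norm_num) hn, List.sum_cons]
    by_cases h : n % 2 = 0
    · have := ih (n / 2) (by omega) (by omega)
      omega
    · omega

theorem s2_two_mul (n : ℕ) : s2 (2 * n) = s2 n := by
  rcases Nat.eq_zero_or_pos n with rfl | hn
  · rfl
  · unfold s2
    rw [Nat.digits_def' (by norm_num) (by omega)]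
    simp

theorem s2_two_mul_add_one (n : ℕ) : s2 (2 * n + 1) = s2 n + 1 := by
  unfold s2
  rw [Nat.digits_def' (by norm_num) (by omega), List.sum_cons]
  have h1 : (2 * n + 1) % 2 = 1 := by omega
  have h2 : (2 * n + 1) / 2 = n := by omega
  rw [h1, h2, add_comm]

theorem s2_pow_mul (a n : ℕ) : s2 (2 ^ a * n) = s2 n := by
  induction a with
  | zero => simp
  | succ a ih => rw [pow_succ', mul_assoc, s2_two_mul, ih]

theorem s2_pow_sub_one (b : ℕ) : s2 (2 ^ b - 1) = b := by
  induction b with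
  | zero => rfl
  | succ b ih =>
    have h : 2 ^ (b + 1) - 1 = 2 * (2 ^ b - 1) + 1 := by
      have := Nat.one_le_two_pow (n := b)
      rw [pow_succ']; omega
    rw [h, s2_two_mul_add_one, ih]

theorem s2_block (a b : ℕ) : s2 (2 ^ a * (2 ^ b - 1)) = b := by
  rw [s2_pow_mul, s2_pow_sub_one]

theorem val_block (a b : ℕ) (hb : 0 < b) : padicValNat 2 (2 ^ a * (2 ^ b - 1)) = a := by
  have : Fact (Nat.Prime 2) := ⟨Nat.prime_two⟩
  obtain ⟨c, rfl⟩ : ∃ c, b = c + 1 := ⟨b - 1, by omega⟩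
  have hp := Nat.one_le_two_pow (n := c)
  have h : 2 ^ (c + 1) - 1 = 2 * (2 ^ c - 1) + 1 := by rw [pow_succ']; omega
  rw [padicValNat.mul (by positivity) (by omega), padicValNat.prime_pow,
    padicValNat.eq_zero_of_not_dvd (n := 2 ^ (c + 1) - 1) (by omega)]
  rfl

/-- Two blocks starting at adjacent positions and adding without carry. -/
theorem special (e p q : ℕ) (hp : 0 < p) (hq : 0 < q)
    (h : s2 (2 ^ e * (2 ^ p - 1) + 2 ^ (e + 1) * (2 ^ q - 1)) = p + q) : p = 1 := by
  by_contra hne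
  obtain ⟨r, rfl⟩ : ∃ r, p = r + 2 := ⟨p - 2, by omega⟩
  obtain ⟨t, rfl⟩ : ∃ t, q = t + 1 := ⟨q - 1, by omega⟩
  have h1 := Nat.one_le_two_pow (n := r)
  have h2 := Nat.one_le_two_pow (n := t)
  have h3 : 2 ^ e * (2 ^ (r + 2) - 1) + 2 ^ (e + 1) * (2 ^ (t + 1) - 1)
      = 2 ^ e * (2 * (2 * (2 ^ r * (2 ^ 1 - 1) + (2 ^ t - 1))) + 1) := by
    rw [pow_succ 2 e, mul_assoc, ← mul_add]
    congr 1
    rw [pow_succ, pow_succ, pow_succ]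
    omega
  rw [h3, s2_pow_mul, s2_two_mul_add_one, s2_two_mul] at h
  have h4 := s2_add_le (2 ^ r * (2 ^ 1 - 1)) (2 ^ t - 1)
  rw [s2_block, s2_pow_sub_one] at h4
  omega

/-- Valuation of `choose (n-1) (k-1)`. -/
theorem val_choose_pred (n k : ℕ) (hk : 0 < k) (hkn : k ≤ n) :
    padicValNat 2 ((n - 1).choose (k - 1)) + padicValNat 2 n
      = padicValNat 2 (n.choose k) + padicValNat 2 k := by
  have : Fact (Nat.Prime 2) := ⟨Nat.prime_two⟩
  obtain ⟨m, rfl⟩ : ∃ m, n = m + 1 := ⟨n - 1, by omega⟩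
  obtain ⟨j, rfl⟩ : ∃ j, k = j + 1 := ⟨k - 1, by omega⟩
  have h := congrArg (padicValNat 2) (Nat.add_one_mul_choose_eq m j)
  rw [padicValNat.mul (by omega) (Nat.choose_pos (by omega)).ne',
    padicValNat.mul (Nat.choose_pos hkn).ne' (by omega)] at h
  simp only [Nat.add_sub_cancel]
  omega

theorem val_choose_pred' (n k : ℕ) (hkn : k < n) :
    padicValNat 2 ((n - 1).choose k) + padicValNat 2 n
      = padicValNat 2 (n.choose k) + padicValNat 2 (n - k) := by
  have h := val_choose_pred n (n - k) (by omega) (by omega)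
  rw [Nat.choose_symm hkn.le] at h
  have h2 : n - k - 1 = n - 1 - k := by omega
  rw [← h, ← Nat.choose_symm (n := n - 1) (k := k) (by omega), h2]

/-- `k` and `n-k` cannot both have the same valuation as `n`. -/
theorem val_ne (n k : ℕ) (hk : 0 < k) (hkn : k < n)
    (h1 : padicValNat 2 k = padicValNat 2 n) (h2 : padicValNat 2 (n - k) = padicValNat 2 n) :
    False := by
  have : Fact (Nat.Prime 2) := ⟨Nat.prime_two⟩
  obtain ⟨x, hx⟩ := pow_padicValNat_dvd (p := 2) (n := k)
  obtain ⟨y, hy⟩ := pow_padicValNat_dvd (p := 2) (n := n - k)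
  have nx := pow_succ_padicValNat_not_dvd (p := 2) (n := k) (by omega)
  have ny := pow_succ_padicValNat_not_dvd (p := 2) (n := n - k) (by omega)
  have nn := pow_succ_padicValNat_not_dvd (p := 2) (n := n) (by omega)
  rw [h1] at hx nx
  rw [h2] at hy ny
  set P := 2 ^ padicValNat 2 n with hP
  have ox : x % 2 = 1 := by
    by_contra hc
    apply nx
    obtain ⟨z, rfl⟩ : ∃ z, x = 2 * z := ⟨x / 2, by omega⟩
    exact ⟨z, by rw [pow_succ, mul_assoc]; exact hx⟩
  have oy : y % 2 = 1 := by
    by_contra hc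
    apply ny
    obtain ⟨z, rfl⟩ : ∃ z, y = 2 * z := ⟨y / 2, by omega⟩
    exact ⟨z, by rw [pow_succ, mul_assoc]; exact hy⟩
  apply nn
  refine ⟨(x + y) / 2, ?_⟩
  have : x + y = 2 * ((x + y) / 2) := by omega
  rw [pow_succ, mul_assoc, ← this, mul_add, ← hx, ← hy]
  omega

open PowerSeries in
/-- The power series `∑ x^n / n!^2`. -/
noncomputable def bes : PowerSeries ℚ := PowerSeries.mk fun n => 1 / (n.factorial : ℚ) ^ 2

theorem coeff_bes_pow (d n : ℕ) :
    PowerSeries.coeff n (bes ^ d) = (Wstar d n : ℚ) / (n.factorial : ℚ) ^ 2 := by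
  have h1 : bes ^ d = ∏ _j : Fin d, bes := by simp
  rw [h1, PowerSeries.coeff_prod, Wstar, Nat.cast_sum, Finset.sum_div]
  refine Finset.sum_bij' (fun x _ => (x : Fin d → ℕ)) (fun x _ => Finsupp.equivFunOnFinite.symm x)
    ?_ ?_ ?_ ?_ ?_
  · intro x hx
    rw [Finset.Nat.mem_antidiagonalTuple]
    simpa using hx
  · intro x hx
    rw [Finset.Nat.mem_antidiagonalTuple] at hx
    simpa using hx
  · intro x hx
    simp
  · intro x hx
    simp
  · intro x hx
    have hs : ∑ i, x i = n := by simpa using hx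
    have hm := Nat.multinomial_spec Finset.univ x
    rw [hs] at hm
    have hm' : (∏ i, ((x i).factorial : ℚ)) * (Nat.multinomial Finset.univ x : ℚ) = n.factorial := by
      exact_mod_cast hm
    have hp : (∏ i, ((x i).factorial : ℚ)) ≠ 0 :=
      Finset.prod_ne_zero_iff.mpr fun i _ => by exact_mod_cast (x i).factorial_ne_zero
    have hn : (n.factorial : ℚ) ≠ 0 := by exact_mod_cast n.factorial_ne_zero
    simp only [bes, PowerSeries.coeff_mk]
    rw [Finset.prod_div_distrib, Finset.prod_pow, Finset.prod_const_one, Nat.cast_pow,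
      div_eq_div_iff (pow_ne_zero _ hp) (pow_ne_zero _ hn), ← hm']
    ring

/-- Euler operator. -/
noncomputable def theta (f : PowerSeries ℚ) : PowerSeries ℚ :=
  PowerSeries.X * PowerSeries.derivative ℚ f

theorem coeff_theta (f : PowerSeries ℚ) (n : ℕ) :
    PowerSeries.coeff n (theta f) = n * PowerSeries.coeff n f := by
  cases n with
  | zero => simp [theta]
  | succ n =>
    rw [theta, PowerSeries.coeff_succ_X_mul, PowerSeries.coeff_derivative]
    push_cast
    ring

theorem theta_theta_bes : theta (theta bes) = PowerSeries.X * bes := by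
  ext n
  rw [coeff_theta, coeff_theta]
  cases n with
  | zero => simp
  | succ n =>
    rw [PowerSeries.coeff_succ_X_mul]
    simp only [bes, PowerSeries.coeff_mk]
    have hn : (n.factorial : ℚ) ≠ 0 := by exact_mod_cast n.factorial_ne_zero
    have hn' : ((n : ℚ) + 1) ≠ 0 := by positivity
    rw [Nat.factorial_succ]
    push_cast
    field_simp

/-- Logarithmic derivative. -/
noncomputable def logd : PowerSeries ℚ := theta bes * bes⁻¹

theorem bes_mul_inv : bes * bes⁻¹ = 1 := by
  apply PowerSeries.mul_inv_cancel
  simp [bes]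

theorem logd_mul_bes : logd * bes = theta bes := by
  rw [logd, mul_assoc, mul_comm _ bes, bes_mul_inv, mul_one]

theorem theta_mul (f g : PowerSeries ℚ) : theta (f * g) = theta f * g + f * theta g := by
  simp only [theta, Derivation.leibniz, smul_eq_mul]
  ring

theorem theta_pow (d : ℕ) : theta (bes ^ d) = d * (logd * bes ^ d) := by
  induction d with
  | zero => simp [theta]
  | succ d ih =>
    rw [pow_succ, theta_mul, ih, ← logd_mul_bes]
    push_cast
    ring

theorem riccati : theta logd + logd ^ 2 = PowerSeries.X := by
  have h := theta_theta_bes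
  rw [← logd_mul_bes, theta_mul, ← logd_mul_bes] at h
  have h2 : (theta logd + logd ^ 2) * bes = PowerSeries.X * bes := by rw [← h]; ring
  have h3 := congrArg (· * bes⁻¹) h2
  simpa only [mul_assoc, bes_mul_inv, mul_one] using h3

/-- Carlitz's integers: `log (∑ x^n / n!^2) = ∑ ell n * x^n / n!^2`. -/
def ell (n : ℕ) : ℤ :=
  if n = 1 then 1 else
  -∑ k ∈ (Finset.Ico 1 n).attach,
    ((n - 1).choose (k.1 - 1) : ℤ) * ((n - 1).choose k.1 : ℤ) *
      (ell k.1 * ell (n - k.1))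
termination_by n
decreasing_by
  all_goals
    have := Finset.mem_Ico.mp k.2
    omega

theorem ell_one : ell 1 = 1 := by rw [ell]; simp

theorem ell_rec (n : ℕ) (hn : n ≠ 1) :
    ell n = -∑ k ∈ Finset.Ico 1 n,
      ((n - 1).choose (k - 1) : ℤ) * ((n - 1).choose k : ℤ) * (ell k * ell (n - k)) := by
  rw [ell, if_neg hn, Finset.sum_attach (Finset.Ico 1 n) (fun k =>
    ((n - 1).choose (k - 1) : ℤ) * ((n - 1).choose k : ℤ) * (ell k * ell (n - k)))]

theorem fact_ne (n : ℕ) : (n.factorial : ℚ) ≠ 0 := by exact_mod_cast n.factorial_ne_zero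

theorem choose_pred_cast (n k : ℕ) (hk : 0 < k) (hkn : k ≤ n) :
    (((n - 1).choose (k - 1) : ℕ) : ℚ) * n * k.factorial * (n - k).factorial
      = n.factorial * k := by
  obtain ⟨m, rfl⟩ : ∃ m, n = m + 1 := ⟨n - 1, by omega⟩
  obtain ⟨j, rfl⟩ : ∃ j, k = j + 1 := ⟨k - 1, by omega⟩
  have h := Nat.choose_mul_factorial_mul_factorial (n := m) (k := j) (by omega)
  have e : m + 1 - (j + 1) = m - j := by omega
  rw [e, Nat.factorial_succ, Nat.factorial_succ, ← h]
  simp only [Nat.add_sub_cancel]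
  push_cast
  ring

theorem choose_pred_cast' (n k : ℕ) (hkn : k < n) :
    (((n - 1).choose k : ℕ) : ℚ) * n * k.factorial * (n - k).factorial
      = n.factorial * (n - k : ℕ) := by
  have h := choose_pred_cast n (n - k) (by omega) (by omega)
  have h2 : n - k - 1 = n - 1 - k := by omega
  have h3 : n - (n - k) = k := by omega
  rw [h2, h3, Nat.choose_symm (by omega)] at h
  linarith

theorem choose_cast (n k : ℕ) (hkn : k ≤ n) :
    ((n.choose k : ℕ) : ℚ) * k.factorial * (n - k).factorial = n.factorial := by
  exact_mod_cast Nat.choose_mul_factorial_mul_factorial hkn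

theorem logd_zero : PowerSeries.coeff 0 logd = 0 := by
  simp [logd, theta, mul_assoc]

theorem coeff_logd (n : ℕ) :
    PowerSeries.coeff n logd = n * (ell n : ℚ) / (n.factorial : ℚ) ^ 2 := by
  induction n using Nat.strong_induction_on with
  | _ n ih =>
    rcases Nat.eq_zero_or_pos n with rfl | hn
    · rw [logd_zero]; simp
    have h := congrArg (PowerSeries.coeff n) riccati
    rw [map_add, coeff_theta, sq, PowerSeries.coeff_mul,
      Finset.Nat.sum_antidiagonal_eq_sum_range_succ
        (fun i j => PowerSeries.coeff i logd * PowerSeries.coeff j logd),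
      Finset.sum_range_succ, Nat.sub_self, logd_zero, mul_zero, add_zero,
      Finset.range_eq_Ico, Finset.sum_eq_sum_Ico_succ_bot hn, logd_zero, zero_mul, zero_add] at h
    by_cases h1 : n = 1
    · subst h1
      simpa [ell_one] using h
    rw [PowerSeries.coeff_X, if_neg h1] at h
    have hn0 : (n : ℚ) ≠ 0 := by exact_mod_cast hn.ne'
    have h2 : (n : ℚ) * PowerSeries.coeff n logd
        = n * (n * (ell n : ℚ) / (n.factorial : ℚ) ^ 2) := by
      rw [eq_neg_of_add_eq_zero_left h, ell_rec n h1]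
      push_cast
      rw [← mul_div_assoc, ← mul_assoc, mul_neg, neg_div, Finset.mul_sum, Finset.sum_div]
      congr 1
      refine Finset.sum_congr rfl fun k hk => ?_
      rw [Finset.mem_Ico] at hk
      rw [ih k (by omega), ih (n - k) (by omega)]
      have a1 := choose_pred_cast n k (by omega) (by omega)
      have a2 := choose_pred_cast' n k (by omega)
      rw [div_mul_div_comm, div_eq_div_iff
        (mul_ne_zero (pow_ne_zero _ (fact_ne _)) (pow_ne_zero _ (fact_ne _)))
        (pow_ne_zero _ (fact_ne _))]
      linear_combination (-(ell k : ℚ) * ell (n - k)) * ((n.factorial : ℚ) * ↑(n - k) * a1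
        + (((n - 1).choose (k - 1) : ℕ) : ℚ) * n * k.factorial * (n - k).factorial * a2)
    exact mul_left_cancel₀ hn0 h2

theorem Wstar_rec (d n : ℕ) (hn : 0 < n) :
    (Wstar d n : ℤ) = d * ∑ k ∈ Finset.Icc 1 n,
      (n.choose k : ℤ) * ((n - 1).choose (k - 1) : ℤ) * (ell k * Wstar d (n - k)) := by
  have h := congrArg (PowerSeries.coeff n) (theta_pow d)
  have hc : (d : PowerSeries ℚ) = PowerSeries.C (d : ℚ) := by simp
  rw [coeff_theta, hc, PowerSeries.coeff_C_mul, PowerSeries.coeff_mul,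
      Finset.Nat.sum_antidiagonal_eq_sum_range_succ
        (fun i j => PowerSeries.coeff i logd * PowerSeries.coeff j (bes ^ d)),
      Finset.range_eq_Ico, Finset.sum_eq_sum_Ico_succ_bot (by omega), logd_zero, zero_mul,
      zero_add, coeff_bes_pow] at h
  have hn0 : (n : ℚ) ≠ 0 := by exact_mod_cast hn.ne'
  have hf := fact_ne n
  have h2 : (Wstar d n : ℚ) = (n.factorial : ℚ) ^ 2 / n * (n * ((Wstar d n : ℚ) /
      (n.factorial : ℚ) ^ 2)) := by field_simp
  have key : (Wstar d n : ℚ) = d * ∑ k ∈ Finset.Icc 1 n,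
      (n.choose k : ℚ) * ((n - 1).choose (k - 1) : ℚ) * (ell k * Wstar d (n - k)) := by
    rw [h2, h, mul_left_comm, Finset.mul_sum]
    congr 1
    refine Finset.sum_congr (by ext; simp) fun k hk => ?_
    simp only [Finset.mem_Icc] at hk
    rw [coeff_logd, coeff_bes_pow]
    have a1 := choose_pred_cast n k (by omega) (by omega)
    have a2 := choose_cast n k (by omega)
    have f1 := fact_ne k
    have f2 := fact_ne (n - k)
    rw [div_mul_div_comm, div_mul_div_comm, div_eq_iff (by positivity)]
    linear_combination (-(ell k : ℚ) * Wstar d (n - k)) * ((n.factorial : ℚ) * a1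
        + (((n - 1).choose (k - 1) : ℕ) : ℚ) * n * k.factorial * (n - k).factorial * a2)
  exact_mod_cast key

/-- All ones precede all zeros in binary. -/
def Block (n : ℕ) : Prop := ∃ a b : ℕ, 0 < b ∧ n = 2 ^ a * (2 ^ b - 1)

theorem block_of_s2_eq_one (n : ℕ) (h : s2 n = 1) : Block n := by
  induction n using Nat.strong_induction_on with
  | _ n ih =>
    rcases Nat.even_or_odd' n with ⟨m, rfl | rfl⟩
    · rw [s2_two_mul] at h
      have hm : m ≠ 0 := by
        rintro rfl
        simp [s2] at h
      obtain ⟨a, b, hb, hab⟩ := ih m (by omega) h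
      exact ⟨a + 1, b, hb, by rw [pow_succ', mul_assoc, ← hab]⟩
    · rw [s2_two_mul_add_one] at h
      have hm : m = 0 := by
        by_contra hm
        have := s2_pos m (by omega)
        omega
      subst hm
      exact ⟨0, 1, by norm_num, by norm_num⟩

theorem exists_odd (n : ℕ) (hn : n ≠ 0) :
    ∃ u : ℤ, (n : ℤ) = 2 ^ padicValNat 2 n * u ∧ Odd u := by
  have : Fact (Nat.Prime 2) := ⟨Nat.prime_two⟩
  obtain ⟨x, hx⟩ := pow_padicValNat_dvd (p := 2) (n := n)
  have nx := pow_succ_padicValNat_not_dvd (p := 2) (n := n) hn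
  refine ⟨x, by exact_mod_cast hx, ?_⟩
  rw [Int.odd_coe_nat]
  by_contra hc
  rw [Nat.not_odd_iff_even] at hc
  obtain ⟨z, hz⟩ := hc
  apply nx
  refine ⟨z, ?_⟩
  rw [pow_succ, mul_assoc, ← two_mul] at *
  rw [← hz]
  exact hx

/-- The property of `ell` we prove by induction. -/
def Good (n : ℕ) : Prop := ∃ u : ℤ, 4 * ell n = 2 ^ (2 * s2 n) * u ∧ (Odd u ↔ Block n)

/-- Summand of the recurrence. -/
def T (n k : ℕ) : ℤ :=
  ((n - 1).choose (k - 1) : ℤ) * ((n - 1).choose k : ℤ) * (ell k * ell (n - k))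

theorem T_eq (n k : ℕ) (hk : 0 < k) (hkn : k < n) (g1 : Good k) (g2 : Good (n - k)) :
    ∃ w : ℤ, 16 * T n k = 2 ^ (padicValNat 2 ((n - 1).choose (k - 1))
      + padicValNat 2 ((n - 1).choose k) + 2 * padicValNat 2 (n.choose k) + 2 * s2 n) * w ∧
      (Odd w ↔ Block k ∧ Block (n - k)) := by
  obtain ⟨u, hu, hu'⟩ := g1
  obtain ⟨v, hv, hv'⟩ := g2
  obtain ⟨x, hx, hx'⟩ := exists_odd ((n - 1).choose (k - 1)) (Nat.choose_pos (by omega)).ne'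
  obtain ⟨y, hy, hy'⟩ := exists_odd ((n - 1).choose k) (Nat.choose_pos (by omega)).ne'
  have hc := val_choose n k hkn.le
  refine ⟨x * y * (u * v), ?_, ?_⟩
  · have e : 16 * T n k = ((n - 1).choose (k - 1) : ℤ) * ((n - 1).choose k : ℤ)
        * ((4 * ell k) * (4 * ell (n - k))) := by unfold T; ring
    have e2 : 2 * padicValNat 2 (n.choose k) + 2 * s2 n = 2 * s2 k + 2 * s2 (n - k) := by omega
    rw [e, hu, hv, add_assoc (_ + _), e2, pow_add, pow_add, pow_add]
    conv_lhs => rw [hx, hy]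
    ring
  · rw [Int.odd_mul, Int.odd_mul, Int.odd_mul, hu', hv']
    tauto

theorem T_symm (n k : ℕ) (hk : 0 < k) (hkn : k < n) : T n (n - k) = T n k := by
  unfold T
  have h1 : n - k - 1 = n - 1 - k := by omega
  have h2 : n - (n - k) = k := by omega
  have h3 : n - k = n - 1 - (k - 1) := by omega
  rw [h1, h2, Nat.choose_symm (by omega)]
  conv_lhs => rw [h3, Nat.choose_symm (by omega), ← h3]
  ring

theorem odd_two_pow_mul (e : ℕ) (w : ℤ) : Odd (2 ^ e * w) ↔ e = 0 ∧ Odd w := by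
  rw [Int.odd_mul, Int.odd_pow]
  simp

theorem T_half (n k : ℕ) (hk : 0 < k) (hkn : 2 * k < n) (g1 : Good k) (g2 : Good (n - k)) :
    ∃ z : ℤ, 2 * (16 * T n k) = 2 ^ (2 * s2 n + 2) * z ∧
      (Odd z ↔ Block n ∧ k = 2 ^ padicValNat 2 n) := by
  obtain ⟨w, hw, hw'⟩ := T_eq n k hk (by omega) g1 g2
  have ha := val_choose_pred n k hk (by omega)
  have hb := val_choose_pred' n k (by omega)
  have hc := val_choose n k (by omega)
  have hne := val_ne n k hk (by omega)
  set a := padicValNat 2 ((n - 1).choose (k - 1))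
  set b := padicValNat 2 ((n - 1).choose k)
  set c := padicValNat 2 (n.choose k)
  have hE : 1 ≤ a + b + 2 * c := by
    by_contra hlt
    exact hne (by omega) (by omega)
  obtain ⟨E, hE'⟩ : ∃ E, a + b + 2 * c = E + 1 := ⟨a + b + 2 * c - 1, by omega⟩
  refine ⟨2 ^ E * w, ?_, ?_⟩
  · rw [hw, hE']
    ring
  rw [odd_two_pow_mul, hw']
  constructor
  · rintro ⟨rfl, ⟨e, p, hp, hkp⟩, ⟨f, q, hq, hkq⟩⟩
    have ve := val_block e p hp
    have vf := val_block f q hq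
    have se := s2_block e p
    have sf := s2_block f q
    rw [← hkp] at ve se
    rw [← hkq] at vf sf
    have hc0 : c = 0 := by omega
    have hsum : n = k + (n - k) := by omega
    rcases (by omega : (a = 0 ∧ b = 1) ∨ (a = 1 ∧ b = 0)) with ⟨h0, h1⟩ | ⟨h0, h1⟩
    · have hf : f = e + 1 := by omega
      subst hf
      have hp1 : p = 1 := by
        apply special e p q hp hq
        rw [← hkp, ← hkq, ← hsum]
        omega
      subst hp1
      have hv : padicValNat 2 n = e := by omega
      rw [hv]
      refine ⟨⟨e, q + 1, by omega, ?_⟩, by rw [hkp]; norm_num⟩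
      rw [hsum, hkp] 
      conv_lhs => rw [← hkp, hkq, hkp]
      rw [pow_succ 2 e, mul_assoc, ← mul_add]
      congr 1
      have := Nat.one_le_two_pow (n := q)
      rw [pow_succ]
      omega
    · have hf : e = f + 1 := by omega
      subst hf
      have hq1 : q = 1 := by
        apply special f q p hq hp
        rw [← hkp, ← hkq, add_comm, ← hsum]
        omega
      subst hq1
      exfalso
      have h2 : 2 ≤ 2 ^ p := by
        calc 2 = 2 ^ 1 := rfl
          _ ≤ 2 ^ p := Nat.pow_le_pow_right (by norm_num) hp
      have h3 : 2 ^ (f + 1) * 1 ≤ k := by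
        rw [hkp]
        exact Nat.mul_le_mul_left _ (by omega)
      have h4 : n - k = 2 ^ f := by rw [hkq]; norm_num
      have h5 := pow_succ 2 f
      omega
  · rintro ⟨⟨e, r, hr, hn⟩, hk2⟩
    have hv := val_block e r hr
    have hs := s2_block e r
    rw [← hn] at hv hs
    rw [hv] at hk2
    have hkb : k = 2 ^ e * (2 ^ 1 - 1) := by rw [hk2]; norm_num
    have hr1 : r ≠ 1 := by
      rintro rfl
      omega
    obtain ⟨q, rfl⟩ : ∃ q, r = q + 1 := ⟨r - 1, by omega⟩
    have hnk : n - k = 2 ^ (e + 1) * (2 ^ q - 1) := by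
      have hh : n = k + 2 ^ (e + 1) * (2 ^ q - 1) := by
        rw [hn, hkb, pow_succ 2 e, mul_assoc, ← mul_add]
        congr 1
        have := Nat.one_le_two_pow (n := q)
        rw [pow_succ]
        omega
      omega
    have vk := val_block e 1 (by norm_num)
    have sk := s2_block e 1
    have vk' := val_block (e + 1) q (by omega)
    have sk' := s2_block (e + 1) q
    rw [← hkb] at vk sk
    rw [← hnk] at vk' sk'
    refine ⟨by omega, ⟨e, 1, by norm_num, hkb⟩, ⟨e + 1, q, by omega, hnk⟩⟩

theorem T_mid (k : ℕ) (hk : 0 < k) (g : Good k) :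
    ∃ z : ℤ, 16 * T (2 * k) k = 2 ^ (2 * s2 (2 * k) + 2) * z ∧ (Odd z ↔ s2 (2 * k) = 1) := by
  have : Fact (Nat.Prime 2) := ⟨Nat.prime_two⟩
  have hkk : 2 * k - k = k := by omega
  obtain ⟨w, hw, hw'⟩ := T_eq (2 * k) k hk (by omega) g (by rwa [hkk])
  have ha := val_choose_pred (2 * k) k hk (by omega)
  have hb := val_choose_pred' (2 * k) k (by omega)
  have hc := val_choose (2 * k) k (by omega)
  have hv : padicValNat 2 (2 * k) = 1 + padicValNat 2 k := by
    rw [padicValNat.mul (by norm_num) (by omega), padicValNat_self]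
  have hs := s2_two_mul k
  have hp := s2_pos k hk
  rw [hkk] at hb hc hw'
  obtain ⟨E, hE⟩ : ∃ E, s2 k = E + 1 := ⟨s2 k - 1, by omega⟩
  refine ⟨2 ^ (4 * E) * w, ?_, ?_⟩
  · rw [hw, ← mul_assoc, ← pow_add]
    congr 2
    omega
  · rw [odd_two_pow_mul, hw']
    constructor
    · rintro ⟨h, -⟩
      omega
    · intro h
      have := block_of_s2_eq_one k (by omega)
      exact ⟨by omega, this, this⟩

theorem ell_split (n : ℕ) (hn : n ≠ 1) :
    ell n = -(2 * ∑ k ∈ (Finset.Ico 1 n).filter (fun k => 2 * k < n), T n k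
      + ∑ k ∈ (Finset.Ico 1 n).filter (fun k => 2 * k = n), T n k) := by
  rw [ell_rec n hn]
  change -∑ k ∈ Finset.Ico 1 n, T n k = _
  congr 1
  rw [← Finset.sum_filter_add_sum_filter_not _ (fun k => 2 * k < n),
    ← Finset.sum_filter_add_sum_filter_not ((Finset.Ico 1 n).filter fun k => ¬ 2 * k < n)
      (fun k => 2 * k = n), Finset.filter_filter, Finset.filter_filter]
  have h1 : (Finset.Ico 1 n).filter (fun k => ¬ 2 * k < n ∧ 2 * k = n)
      = (Finset.Ico 1 n).filter (fun k => 2 * k = n) := by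
    apply Finset.filter_congr
    intros
    omega
  have h2 : ∑ k ∈ (Finset.Ico 1 n).filter (fun k => ¬ 2 * k < n ∧ ¬ 2 * k = n), T n k
      = ∑ k ∈ (Finset.Ico 1 n).filter (fun k => 2 * k < n), T n k := by
    refine Finset.sum_nbij' (fun k => n - k) (fun k => n - k) ?_ ?_ ?_ ?_ ?_
    · intro k hk
      simp only [Finset.mem_filter, Finset.mem_Ico] at hk ⊢
      omega
    · intro k hk
      simp only [Finset.mem_filter, Finset.mem_Ico] at hk ⊢
      omega
    · intro k hk
      simp only [Finset.mem_filter, Finset.mem_Ico] at hk ⊢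
      omega
    · intro k hk
      simp only [Finset.mem_filter, Finset.mem_Ico] at hk ⊢
      omega
    · intro k hk
      simp only [Finset.mem_filter, Finset.mem_Ico] at hk
      exact (T_symm n k (by omega) (by omega)).symm
  rw [h1, h2]
  ring

theorem even_sum (s : Finset ℕ) (z : ℕ → ℤ) (h : ∀ k ∈ s, Even (z k)) : Even (∑ k ∈ s, z k) := by
  rw [even_iff_two_dvd]
  exact Finset.dvd_sum fun k hk => even_iff_two_dvd.mp (h k hk)

theorem good (n : ℕ) (hn : 0 < n) : Good n := by
  induction n using Nat.strong_induction_on with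
  | _ n ih =>
    by_cases h1 : n = 1
    · subst h1
      refine ⟨1, ?_, ?_⟩
      · rw [ell_one]; simp [s2]
      · exact ⟨fun _ => ⟨0, 1, by norm_num, by norm_num⟩, fun _ => odd_one⟩
    have hz : ∀ k, ∃ z : ℤ, k ∈ (Finset.Ico 1 n).filter (fun k => 2 * k < n) →
        2 * (16 * T n k) = 2 ^ (2 * s2 n + 2) * z ∧
          (Odd z ↔ Block n ∧ k = 2 ^ padicValNat 2 n) := by
      intro k
      by_cases hk : k ∈ (Finset.Ico 1 n).filter (fun k => 2 * k < n)
      · have hk' := hk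
        simp only [Finset.mem_filter, Finset.mem_Ico] at hk'
        obtain ⟨z, hz⟩ := T_half n k (by omega) (by omega) (ih k (by omega) (by omega))
          (ih (n - k) (by omega) (by omega))
        exact ⟨z, fun _ => hz⟩
      · exact ⟨0, fun h => absurd h hk⟩
    choose z hz using hz
    have hmid : ∃ y : ℤ, 16 * ∑ k ∈ (Finset.Ico 1 n).filter (fun k => 2 * k = n), T n k
        = 2 ^ (2 * s2 n + 2) * y ∧ (Odd y ↔ s2 n = 1) := by
      rcases Nat.even_or_odd' n with ⟨m, hm | hm⟩
      · have hf : (Finset.Ico 1 n).filter (fun k => 2 * k = n) = {m} := by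
          ext k
          simp only [Finset.mem_filter, Finset.mem_Ico, Finset.mem_singleton]
          omega
        rw [hf, Finset.sum_singleton]
        have := T_mid m (by omega) (ih m (by omega) (by omega))
        rwa [← hm] at this
      · have hf : (Finset.Ico 1 n).filter (fun k => 2 * k = n) = ∅ := by
          ext k
          simp only [Finset.mem_filter, Finset.mem_Ico, Finset.notMem_empty, iff_false]
          omega
        rw [hf, Finset.sum_empty]
        refine ⟨0, by simp, ?_⟩
        have hs := s2_two_mul_add_one m
        have hp := s2_pos m (by omega)
        rw [← hm] at hs
        constructor
        · intro h
          simp at h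
        · intro h
          omega
    obtain ⟨y, hy, hy'⟩ := hmid
    set S := (Finset.Ico 1 n).filter (fun k => 2 * k < n) with hS
    refine ⟨-(∑ k ∈ S, z k + y), ?_, ?_⟩
    · have hsum : 2 * (16 * ∑ k ∈ S, T n k) = 2 ^ (2 * s2 n + 2) * ∑ k ∈ S, z k := by
        rw [Finset.mul_sum, Finset.mul_sum, Finset.mul_sum]
        exact Finset.sum_congr rfl fun k hk => (hz k hk).1
      have h16 : 4 * (4 * ell n) = 4 * (2 ^ (2 * s2 n) * -(∑ k ∈ S, z k + y)) := by
        rw [ell_split n h1]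
        rw [pow_add] at hsum hy
        linear_combination -hsum - hy
      linarith
    · rw [odd_neg, Int.odd_add]
      by_cases hB : Block n
      · have hB' := hB
        obtain ⟨a, b, hb, hab⟩ := hB
        have hs := s2_block a b
        have hv := val_block a b hb
        rw [← hab] at hs hv
        simp only [hB', iff_true]
        by_cases hb1 : b = 1
        · have hyo : Odd y := hy'.mpr (by omega)
          have hev : Even (∑ k ∈ S, z k) := by
            apply even_sum
            intro k hk
            rw [← Int.not_odd_iff_even, (hz k hk).2]
            rintro ⟨-, h⟩
            rw [hS, Finset.mem_filter] at hk
            rw [hv] at h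
            rw [hb1] at hab
            omega
          rw [← Int.not_odd_iff_even] at hev
          rw [← Int.not_odd_iff_even]
          tauto
        · have hye : Even y := by
            rw [← Int.not_odd_iff_even, hy']
            omega
          have hmem : 2 ^ a ∈ S := by
            rw [hS, Finset.mem_filter, Finset.mem_Ico]
            have hpa := Nat.one_le_two_pow (n := a)
            have h4 : 4 ≤ 2 ^ b := by
              calc 4 = 2 ^ 2 := rfl
                _ ≤ 2 ^ b := Nat.pow_le_pow_right (by norm_num) (by omega)
            have : 2 ^ a * 3 ≤ n := by
              rw [hab]
              exact Nat.mul_le_mul_left _ (by omega)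
            omega
          have hodd : Odd (∑ k ∈ S, z k) := by
            rw [← Finset.add_sum_erase _ _ hmem]
            apply Odd.add_even
            · rw [(hz _ hmem).2, hv]
              exact ⟨hB', rfl⟩
            · apply even_sum
              intro k hk
              rw [Finset.mem_erase] at hk
              rw [← Int.not_odd_iff_even, (hz k hk.2).2, hv]
              tauto
          exact iff_of_true hodd hye
      · have hye : ¬ Odd y := by
          rw [hy']
          exact fun h => hB (block_of_s2_eq_one n h)
        have hev : Even (∑ k ∈ S, z k) := by
          apply even_sum
          intro k hk
          rw [← Int.not_odd_iff_even, (hz k hk).2]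
          tauto
        rw [← Int.not_odd_iff_even] at hev ⊢
        tauto

theorem Wstar_zero (d : ℕ) : Wstar d 0 = 1 := by
  simp [Wstar, Finset.Nat.antidiagonalTuple_zero_right, Nat.multinomial]

theorem Wstar_good (d : ℕ) (hd : 0 < d) (hd2 : 3 ≤ padicValNat 2 d) (n : ℕ) (hn : 0 < n) :
    ∃ u : ℤ, 4 * (Wstar d n : ℤ) = 2 ^ (2 * s2 n + padicValNat 2 d) * u ∧ (Odd u ↔ Block n) := by
  induction n using Nat.strong_induction_on with
  | _ n ih =>
    obtain ⟨m, hm, hmo⟩ := exists_odd d (by omega)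
    obtain ⟨K, hK⟩ : ∃ K, padicValNat 2 d = K + 3 := ⟨padicValNat 2 d - 3, by omega⟩
    have hz : ∀ k ∈ Finset.Ico 1 n, ((2 : ℤ) ^ (2 * s2 n + 3)) ∣
        16 * ((n.choose k : ℤ) * ((n - 1).choose (k - 1) : ℤ) * (ell k * Wstar d (n - k))) := by
      intro k hk
      rw [Finset.mem_Ico] at hk
      obtain ⟨u, hu, -⟩ := ih (n - k) (by omega) (by omega)
      obtain ⟨v, hv, -⟩ := good k (by omega)
      obtain ⟨x, hx, -⟩ := exists_odd (n.choose k) (Nat.choose_pos (by omega)).ne'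
      have hc := val_choose n k (by omega)
      have e : 16 * ((n.choose k : ℤ) * ((n - 1).choose (k - 1) : ℤ) * (ell k * Wstar d (n - k)))
          = (n.choose k : ℤ) * ((n - 1).choose (k - 1) : ℤ) * ((4 * ell k) *
            (4 * Wstar d (n - k))) := by ring
      rw [e, hu, hv]
      conv_rhs => rw [hx]
      have e2 : (2 : ℤ) ^ padicValNat 2 (n.choose k) * 2 ^ (2 * s2 k)
          * 2 ^ (2 * s2 (n - k) + padicValNat 2 d)
          = 2 ^ (2 * s2 n + 3) * 2 ^ (3 * padicValNat 2 (n.choose k) + K) := by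
        rw [← pow_add, ← pow_add, ← pow_add]
        congr 1
        omega
      refine ⟨2 ^ (3 * padicValNat 2 (n.choose k) + K) * x * ((n - 1).choose (k - 1) : ℤ)
        * v * u, ?_⟩
      linear_combination (x * ((n - 1).choose (k - 1) : ℤ) * v * u) * e2
    obtain ⟨t, ht⟩ := Finset.dvd_sum hz
    rw [← Finset.mul_sum] at ht
    obtain ⟨u, hu, hu'⟩ := good n hn
    refine ⟨m * (u + 2 * t), ?_, ?_⟩
    · have h := Wstar_rec d n hn
      have hI : Finset.Icc 1 n = Finset.Ico 1 (n + 1) := by ext; simp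
      rw [hI, Finset.sum_Ico_succ_top (by omega), Nat.sub_self, Wstar_zero, Nat.choose_self,
        Nat.choose_self] at h
      have h4 : 4 * (4 * (Wstar d n : ℤ))
          = 4 * (2 ^ (2 * s2 n + padicValNat 2 d) * (m * (u + 2 * t))) := by
        rw [h]
        push_cast
        rw [pow_add] at ht ⊢
        conv_lhs => rw [hm]
        linear_combination (2 ^ padicValNat 2 d * m) * ht + 4 * (2 ^ padicValNat 2 d * m) * hu
      linarith
    · rw [← hu', Int.odd_mul, Int.odd_add]
      simp [hmo]

theorem stmt_5 (d n : ℕ) (hd : 0 < d) (hd2 : 3 ≤ padicValNat 2 d) (hn : 0 < n) :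
    padicValNat 2 (W d n) = 3 * s2 n + (padicValNat 2 d - 2) ↔
      ∃ a b : ℕ, 0 < b ∧ n = 2 ^ a * (2 ^ b - 1) := by
  have : Fact (Nat.Prime 2) := ⟨Nat.prime_two⟩
  change _ ↔ Block n
  obtain ⟨u, hu, hu'⟩ := Wstar_good d hd hd2 n hn
  rw [← hu']
  by_cases h0 : Wstar d n = 0
  · have hu0 : u = 0 := by
      rw [h0] at hu
      simpa using hu
    have hW : W d n = 0 := by simp [W, h0]
    rw [hW, hu0]
    constructor
    · intro h
      rw [padicValNat_zero_right] at h
      omega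
    · intro h
      simp at h
  · have hcc := val_choose (2 * n) n (by omega)
    have hnn : 2 * n - n = n := by omega
    rw [hnn, s2_two_mul] at hcc
    rw [W, padicValNat.mul (Nat.choose_pos (by omega)).ne' h0]
    obtain ⟨x, hx, hxo⟩ := exists_odd (Wstar d n) h0
    set V := padicValNat 2 (Wstar d n)
    have hx4 : (2 : ℤ) ^ (V + 2) * x = 2 ^ (2 * s2 n + padicValNat 2 d) * u := by
      rw [← hu]
      conv_rhs => rw [hx]
      ring
    constructor
    · intro h
      have hV : V + 2 = 2 * s2 n + padicValNat 2 d := by omega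
      rw [hV] at hx4
      rw [← mul_left_cancel₀ (by positivity) hx4]
      exact hxo
    · intro hodd
      rcases lt_trichotomy (V + 2) (2 * s2 n + padicValNat 2 d) with h | h | h
      · exfalso
        obtain ⟨r, hr⟩ : ∃ r, 2 * s2 n + padicValNat 2 d = V + 2 + (r + 1) :=
          ⟨2 * s2 n + padicValNat 2 d - (V + 2) - 1, by omega⟩
        rw [hr, pow_add _ (V + 2), mul_assoc] at hx4
        rw [mul_left_cancel₀ (by positivity) hx4, odd_two_pow_mul] at hxo
        omega
      · omega
      · exfalso
        obtain ⟨r, hr⟩ : ∃ r, V + 2 = 2 * s2 n + padicValNat 2 d + (r + 1) :=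
          ⟨V + 2 - (2 * s2 n + padicValNat 2 d) - 1, by omega⟩
        rw [hr, pow_add _ (2 * s2 n + padicValNat 2 d), mul_assoc] at hx4
        rw [← mul_left_cancel₀ (by positivity) hx4, odd_two_pow_mul] at hodd
        omega
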